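/- Let b ≥ 3, let Λ ⊆ ℝ^b be a countable additive subgroup, and let B be a connected open subset of the period domain D (in the subspace topology). Then any two points [x], [y] ∈ B are strongly equivalent as points of B: there exist k ≥ 1, generic positive three-dimensional subspaces W₁, …, W_k ⊆ ℝ^b, and points [x] = [x₁], [x₂], …, [x_{k+1}] = [y] in B such that for each i = 1, …, k the points [x_i] and [x_{i+1}] lie in the same connected component of T_{W_i} ∩ B. -/

import Mathlib

noncomputable section

open scoped BigOperators

def eps {b : ℕ} (i : Fin b) : ℝ := if (i : ℕ) < 3 then 1 else -1

def bR {b : ℕ} (v w : Fin b → ℝ) : ℝ := ∑ i, eps i * v i * w i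

def qR {b : ℕ} (v : Fin b → ℝ) : ℝ := bR v v

def bC {b : ℕ} (z w : Fin b → ℂ) : ℂ := ∑ i, (eps i : ℂ) * z i * w i

def qC {b : ℕ} (z : Fin b → ℂ) : ℂ := bC z z

def conjVec {b : ℕ} (z : Fin b → ℂ) : Fin b → ℂ := fun i => (starRingEnd ℂ) (z i)

def rePart {b : ℕ} (z : Fin b → ℂ) : Fin b → ℝ := fun i => (z i).re
def imPart {b : ℕ} (z : Fin b → ℂ) : Fin b → ℝ := fun i => (z i).im

def cplx {b : ℕ} (v : Fin b → ℝ) : Fin b → ℂ := fun i => (v i : ℂ)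

def isPeriodVec {b : ℕ} (z : Fin b → ℂ) : Prop :=
  qC z = 0 ∧ 0 < (bC z (conjVec z)).re

instance projectivizationTopology (K V : Type*) [DivisionRing K] [AddCommGroup V] [Module K V]
    [TopologicalSpace V] : TopologicalSpace (Projectivization K V) :=
  inferInstanceAs (TopologicalSpace (Quotient (projectivizationSetoid K V)))

def periodDomain (b : ℕ) : Set (Projectivization ℂ (Fin b → ℂ)) :=
  {x | ∃ (z : Fin b → ℂ) (hz : z ≠ 0), Projectivization.mk ℂ z hz = x ∧ isPeriodVec z}

def Pspan {b : ℕ} (z : Fin b → ℂ) : Submodule ℝ (Fin b → ℝ) :=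
  Submodule.span ℝ {rePart z, imPart z}

def PosDefOn {b : ℕ} (W : Submodule ℝ (Fin b → ℝ)) : Prop :=
  ∀ v ∈ W, v ≠ 0 → 0 < qR v

def twistorLine {b : ℕ} (W : Submodule ℝ (Fin b → ℝ)) :
    Set (Projectivization ℂ (Fin b → ℂ)) :=
  {x | ∃ (z : Fin b → ℂ) (hz : z ≠ 0), Projectivization.mk ℂ z hz = x ∧ isPeriodVec z ∧
    rePart z ∈ W ∧ imPart z ∈ W}

/-- `W^⊥ ∩ Λ = {0}`: the twistor line / three-space `W` is generic w.r.t. `Λ`. -/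
def IsGenericW {b : ℕ} (Λ : AddSubgroup (Fin b → ℝ)) (W : Submodule ℝ (Fin b → ℝ)) : Prop :=
  ∀ α ∈ Λ, (∀ w ∈ W, bR α w = 0) → α = 0

def bRlin {b : ℕ} (p : Fin b → ℝ) : (Fin b → ℝ) →ₗ[ℝ] ℝ where
  toFun v := bR v p
  map_add' x y := by
    unfold bR
    rw [← Finset.sum_add_distrib]
    exact Finset.sum_congr rfl fun i _ => by simp [Pi.add_apply]; ring
  map_smul' c x := by
    show bR (c • x) p = (RingHom.id ℝ) c • bR x p
    unfold bR
    rw [RingHom.id_apply, smul_eq_mul, Finset.mul_sum]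
    exact Finset.sum_congr rfl fun i _ => by simp [Pi.smul_apply]; ring

def perpSubmodule {b : ℕ} (P : Submodule ℝ (Fin b → ℝ)) : Submodule ℝ (Fin b → ℝ) :=
  ⨅ p ∈ P, LinearMap.ker (bRlin p)

section Helpers

open Topology

lemma bR_add_left {b : ℕ} (u v w : Fin b → ℝ) : bR (u + v) w = bR u w + bR v w := by
  unfold bR
  rw [← Finset.sum_add_distrib]
  exact Finset.sum_congr rfl fun i _ => by simp only [Pi.add_apply]; ring

lemma bR_smul_left {b : ℕ} (c : ℝ) (v w : Fin b → ℝ) : bR (c • v) w = c * bR v w := by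
  unfold bR
  rw [Finset.mul_sum]
  exact Finset.sum_congr rfl fun i _ => by simp only [Pi.smul_apply, smul_eq_mul]; ring

lemma bR_comm {b : ℕ} (v w : Fin b → ℝ) : bR v w = bR w v := by
  unfold bR
  exact Finset.sum_congr rfl fun i _ => by ring

lemma bR_add_right {b : ℕ} (u v w : Fin b → ℝ) : bR w (u + v) = bR w u + bR w v := by
  rw [bR_comm, bR_add_left, bR_comm u, bR_comm v]

lemma bR_smul_right {b : ℕ} (c : ℝ) (v w : Fin b → ℝ) : bR w (c • v) = c * bR w v := by
  rw [bR_comm, bR_smul_left, bR_comm v]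

lemma eps_ne {b : ℕ} (i : Fin b) : eps i ≠ 0 := by
  unfold eps; split_ifs <;> norm_num

lemma bR_continuous {b : ℕ} :
    Continuous (fun p : (Fin b → ℝ) × (Fin b → ℝ) => bR p.1 p.2) := by
  unfold bR
  fun_prop

lemma bR_cont' {b : ℕ} {X : Type*} [TopologicalSpace X] {f g : X → (Fin b → ℝ)}
    (hf : Continuous f) (hg : Continuous g) : Continuous (fun x => bR (f x) (g x)) :=
  bR_continuous.comp (hf.prodMk hg)

lemma qR_cont' {b : ℕ} {X : Type*} [TopologicalSpace X] {f : X → (Fin b → ℝ)}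
    (hf : Continuous f) : Continuous (fun x => qR (f x)) := bR_cont' hf hf

/-- Gram determinant of a pair. -/
def gram2 {b : ℕ} (u v : Fin b → ℝ) : ℝ := qR u * qR v - bR u v ^ 2

lemma gram2_cont' {b : ℕ} {X : Type*} [TopologicalSpace X] {f g : X → (Fin b → ℝ)}
    (hf : Continuous f) (hg : Continuous g) : Continuous (fun x => gram2 (f x) (g x)) := by
  have h1 := qR_cont' hf
  have h2 := qR_cont' hg
  have h3 := bR_cont' hf hg
  unfold gram2
  fun_prop

/-- positive pairs -/
def Pos2 {b : ℕ} (u v : Fin b → ℝ) : Prop := 0 < qR u ∧ 0 < gram2 u v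

/-- positive triples -/
def Pos3 {b : ℕ} (u v w : Fin b → ℝ) : Prop :=
  0 < qR u ∧ 0 < gram2 u v ∧
    0 < gram2 u v * gram2 u w - (qR u * bR v w - bR u v * bR u w) ^ 2

lemma Pos2.symm {b : ℕ} {u v : Fin b → ℝ} (h : Pos2 u v) : Pos2 v u := by
  obtain ⟨h1, h2⟩ := h
  have h3 : 0 < qR v := by
    unfold gram2 at h2
    by_contra hc
    nlinarith [sq_nonneg (bR u v)]
  refine ⟨h3, ?_⟩
  unfold gram2 at *
  rw [bR_comm v u]; linarith

lemma isOpen_Pos2 {b : ℕ} {X : Type*} [TopologicalSpace X] {f g : X → (Fin b → ℝ)}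
    (hf : Continuous f) (hg : Continuous g) : IsOpen {x | Pos2 (f x) (g x)} :=
  (isOpen_lt continuous_const (qR_cont' hf)).inter
    (isOpen_lt continuous_const (gram2_cont' hf hg))

lemma isOpen_Pos3 {b : ℕ} {X : Type*} [TopologicalSpace X] {f g h : X → (Fin b → ℝ)}
    (hf : Continuous f) (hg : Continuous g) (hh : Continuous h) :
    IsOpen {x | Pos3 (f x) (g x) (h x)} := by
  have h1 := qR_cont' hf
  have h2 := gram2_cont' hf hg
  have h3 := gram2_cont' hf hh
  have h4 := bR_cont' hg hh
  have h5 := bR_cont' hf hg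
  have h6 := bR_cont' hf hh
  have h7 : Continuous fun x => gram2 (f x) (g x) * gram2 (f x) (h x) -
      (qR (f x) * bR (g x) (h x) - bR (f x) (g x) * bR (f x) (h x)) ^ 2 := by fun_prop
  exact (isOpen_lt continuous_const h1).inter
    ((isOpen_lt continuous_const h2).inter (isOpen_lt continuous_const h7))

lemma Pos3.pos {b : ℕ} {u v w : Fin b → ℝ} (h : Pos3 u v w) (x y z : ℝ)
    (hne : ¬ (x = 0 ∧ y = 0 ∧ z = 0)) : 0 < qR (x • u + y • v + z • w) := by
  obtain ⟨h1, h2, h3⟩ := h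
  set m := qR u * bR v w - bR u v * bR u w with hm
  have e : qR u * gram2 u v * qR (x • u + y • v + z • w) =
      gram2 u v * (qR u * x + bR u v * y + bR u w * z) ^ 2 + (gram2 u v * y + m * z) ^ 2
       + (gram2 u v * gram2 u w - m ^ 2) * z ^ 2 := by
    rw [hm]
    unfold gram2 qR
    simp only [bR_add_left, bR_add_right, bR_smul_left, bR_smul_right]
    rw [bR_comm v u, bR_comm w u, bR_comm w v]
    ring
  have hA : 0 < qR u * gram2 u v := mul_pos h1 h2
  have : 0 < qR u * gram2 u v * qR (x • u + y • v + z • w) := by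
    rw [e]
    by_cases hz : z = 0
    · by_cases hy : y = 0
      · have hx : x ≠ 0 := fun hx => hne ⟨hx, hy, hz⟩
        subst hz; subst hy
        have : 0 < (qR u * x) ^ 2 := by positivity
        simp only [mul_zero, add_zero]
        nlinarith [mul_pos h2 this]
      · subst hz
        have : 0 < (gram2 u v * y) ^ 2 := by positivity
        simp only [mul_zero, add_zero]
        nlinarith [mul_nonneg h2.le (sq_nonneg (qR u * x + bR u v * y))]
    · have : 0 < z ^ 2 := by positivity
      nlinarith [mul_pos h3 this, mul_nonneg h2.le (sq_nonneg (qR u * x + bR u v * y + bR u w * z)),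
        sq_nonneg (gram2 u v * y + m * z)]
  exact (pos_iff_pos_of_mul_pos this).1 hA

lemma Pos3.posDefOn {b : ℕ} {u v w : Fin b → ℝ} (h : Pos3 u v w) :
    PosDefOn (Submodule.span ℝ {u, v, w}) := by
  intro s hs hs0
  rw [Submodule.mem_span_triple] at hs
  obtain ⟨x, y, z, rfl⟩ := hs
  refine h.pos x y z ?_
  rintro ⟨rfl, rfl, rfl⟩
  simp at hs0

lemma Pos3.finrank {b : ℕ} {u v w : Fin b → ℝ} (h : Pos3 u v w) :
    Module.finrank ℝ (Submodule.span ℝ {u, v, w}) = 3 := by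
  have hli : LinearIndependent ℝ ![u, v, w] := by
    rw [Fintype.linearIndependent_iff]
    intro g hg
    simp only [Fin.sum_univ_three, Matrix.cons_val_zero, Matrix.cons_val_one,
      Matrix.cons_val] at hg
    by_contra hc
    have := h.pos (g 0) (g 1) (g 2) (by
      rintro ⟨h0, h1, h2⟩
      apply hc
      intro i
      fin_cases i <;> assumption)
    rw [hg] at this
    simp [qR, bR] at this
  have := finrank_span_eq_card hli
  have hr : Set.range ![u, v, w] = {u, v, w} := by
    ext s
    simp only [Set.mem_range, Fin.exists_fin_succ, Set.mem_insert_iff, Set.mem_singleton_iff]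
    simp [eq_comm]
  rw [hr] at this
  simpa using this

/-- A vector pairing nontrivially with all nonzero elements of `Λ`. -/
def GenVec {b : ℕ} (Λ : AddSubgroup (Fin b → ℝ)) (u : Fin b → ℝ) : Prop :=
  ∀ α ∈ Λ, α ≠ 0 → bR α u ≠ 0

lemma GenVec.generic {b : ℕ} {Λ : AddSubgroup (Fin b → ℝ)} {u : Fin b → ℝ} (h : GenVec Λ u)
    {W : Submodule ℝ (Fin b → ℝ)} (hu : u ∈ W) : IsGenericW Λ W := by
  intro α hα hW
  by_contra h0
  exact h α hα h0 (hW u hu)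

lemma dense_genVec {b : ℕ} {Λ : AddSubgroup (Fin b → ℝ)}
    (hΛ : (Λ : Set (Fin b → ℝ)).Countable) : Dense {u | GenVec Λ u} := by
  have key : Dense (⋂ α ∈ (Λ : Set (Fin b → ℝ)) \ {0}, {u : Fin b → ℝ | bR α u ≠ 0}) := by
    refine dense_biInter_of_isOpen ?_ (hΛ.mono Set.diff_subset) ?_
    · intro α _
      exact isOpen_ne_fun (bR_cont' continuous_const continuous_id) continuous_const
    · rintro α ⟨_, hα⟩
      have hα0 : α ≠ 0 := hα
      have : {u : Fin b → ℝ | bR α u ≠ 0} = (LinearMap.ker (bRlin α) : Set (Fin b → ℝ))ᶜ := by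
        ext u
        simp only [Set.mem_setOf_eq, Set.mem_compl_iff, SetLike.mem_coe, LinearMap.mem_ker]
        change _ ↔ ¬ (bR u α = 0)
        rw [bR_comm]
      rw [this, ← interior_eq_empty_iff_dense_compl]
      by_contra hne
      have htop := Submodule.eq_top_of_nonempty_interior' _ (Set.nonempty_iff_ne_empty.2 hne)
      apply hα0
      funext i
      have hi : (Pi.single i 1 : Fin b → ℝ) ∈ LinearMap.ker (bRlin α) := by rw [htop]; trivial
      have hi' : bR (Pi.single i 1 : Fin b → ℝ) α = 0 := hi
      unfold bR at hi'
      rw [Finset.sum_eq_single i] at hi'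
      · simpa [eps_ne] using hi'
      · intro j _ hj
        simp [Pi.single_eq_of_ne hj]
      · simp
  refine key.mono ?_
  intro u hu α hα h0
  simp only [Set.mem_iInter] at hu
  exact hu α ⟨hα, h0⟩

lemma exists_third {b : ℕ} (hb : 3 ≤ b) (u v : Fin b → ℝ) :
    ∃ c : Fin b → ℝ, 0 < qR c ∧ bR u c = 0 ∧ bR v c = 0 := by
  let ext : (Fin 3 → ℝ) →ₗ[ℝ] (Fin b → ℝ) :=
    { toFun := fun c i => if h : (i : ℕ) < 3 then c ⟨i, h⟩ else 0
      map_add' := by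
        intro x y; funext i
        by_cases h : (i : ℕ) < 3 <;> simp [h]
      map_smul' := by
        intro r x; funext i
        by_cases h : (i : ℕ) < 3 <;> simp [h] }
  let L : (Fin 3 → ℝ) →ₗ[ℝ] ℝ × ℝ := ((bRlin u).comp ext).prod ((bRlin v).comp ext)
  have hk : LinearMap.ker L ≠ ⊥ := LinearMap.ker_ne_bot_of_finrank_lt (by simp)
  obtain ⟨c, hc, hc0⟩ := Submodule.exists_mem_ne_zero_of_ne_bot hk
  have hc' : (bR (ext c) u, bR (ext c) v) = 0 := hc
  rw [Prod.mk_eq_zero] at hc'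
  refine ⟨ext c, ?_, by rw [bR_comm]; exact hc'.1, by rw [bR_comm]; exact hc'.2⟩
  obtain ⟨j, hj⟩ := Function.ne_iff.1 hc0
  have hterm : ∀ i : Fin b, 0 ≤ eps i * ext c i * ext c i := by
    intro i
    by_cases h : (i : ℕ) < 3
    · simp only [eps, h, if_true, one_mul]; exact mul_self_nonneg _
    · have : ext c i = 0 := by simp [ext, h]
      simp [this]
  unfold qR bR
  refine Finset.sum_pos' (fun i _ => hterm i) ⟨⟨j, by omega⟩, Finset.mem_univ _, ?_⟩
  have : ext c ⟨j, by omega⟩ = c j := by simp [ext]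
  rw [this]
  simp only [eps, j.2, if_true, one_mul]
  exact mul_self_pos.2 hj

lemma pos3_shift {b : ℕ} {u v c : Fin b → ℝ} (h : Pos2 u v) (hc : 0 < qR c) (h1 : bR u c = 0)
    (h2 : bR v c = 0) {t : ℝ} (ht : 0 < t) : Pos3 u v (v + t • c) := by
  refine ⟨h.1, h.2, ?_⟩
  have e : gram2 u v * gram2 u (v + t • c) -
      (qR u * bR v (v + t • c) - bR u v * bR u (v + t • c)) ^ 2 =
      gram2 u v * (qR u * (t ^ 2 * qR c)) := by
    unfold gram2 qR
    simp only [bR_add_left, bR_add_right, bR_smul_left, bR_smul_right, h1, h2]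
    rw [bR_comm c v, h2]
    ring
  rw [e]
  have := h.1
  have := h.2
  positivity

/-! ### Period vectors -/

lemma qC_re {b : ℕ} (z : Fin b → ℂ) : (qC z).re = qR (rePart z) - qR (imPart z) := by
  unfold qC bC qR bR rePart imPart
  rw [Complex.re_sum, ← Finset.sum_sub_distrib]
  exact Finset.sum_congr rfl fun i _ => by simp

lemma qC_im {b : ℕ} (z : Fin b → ℂ) : (qC z).im = 2 * bR (rePart z) (imPart z) := by
  unfold qC bC bR rePart imPart
  rw [Complex.im_sum, Finset.mul_sum]
  exact Finset.sum_congr rfl fun i _ => by simp; ring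

lemma bC_conj {b : ℕ} (z : Fin b → ℂ) :
    (bC z (conjVec z)).re = qR (rePart z) + qR (imPart z) := by
  unfold bC conjVec qR bR rePart imPart
  rw [Complex.re_sum, ← Finset.sum_add_distrib]
  exact Finset.sum_congr rfl fun i _ => by simp

lemma isPeriodVec_iff {b : ℕ} (z : Fin b → ℂ) : isPeriodVec z ↔
    qR (rePart z) = qR (imPart z) ∧ bR (rePart z) (imPart z) = 0 ∧ 0 < qR (rePart z) := by
  unfold isPeriodVec
  rw [Complex.ext_iff, qC_re, qC_im, bC_conj]
  simp only [Complex.zero_re, Complex.zero_im]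
  constructor
  · rintro ⟨⟨h1, h2⟩, h3⟩
    refine ⟨by linarith, by linarith, by linarith⟩
  · rintro ⟨h1, h2, h3⟩
    refine ⟨⟨by linarith, by linarith⟩, by linarith⟩

lemma isPeriodVec_smul {b : ℕ} {z : Fin b → ℂ} (h : isPeriodVec z) {c : ℂ} (hc : c ≠ 0) :
    isPeriodVec (c • z) := by
  have e1 : qC (c • z) = c ^ 2 * qC z := by
    unfold qC bC
    rw [Finset.mul_sum]
    exact Finset.sum_congr rfl fun i _ => by simp only [Pi.smul_apply, smul_eq_mul]; ring
  have e2 : bC (c • z) (conjVec (c • z)) = (Complex.normSq c : ℂ) * bC z (conjVec z) := by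
    unfold bC conjVec
    rw [Finset.mul_sum]
    refine Finset.sum_congr rfl fun i _ => ?_
    simp only [Pi.smul_apply, smul_eq_mul, map_mul, ← Complex.mul_conj]; ring
  refine ⟨by rw [e1, h.1, mul_zero], ?_⟩
  rw [e2, Complex.re_ofReal_mul]
  exact mul_pos (Complex.normSq_pos.2 hc) h.2

lemma period_of_mem {b : ℕ} {z : Fin b → ℂ} (hz : z ≠ 0)
    (h : Projectivization.mk ℂ z hz ∈ periodDomain b) : isPeriodVec z := by
  obtain ⟨w, hw, he, hp⟩ := h
  rw [Projectivization.mk_eq_mk_iff'] at he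
  obtain ⟨a, ha⟩ := he
  have ha0 : a ≠ 0 := by rintro rfl; simp at ha; exact hw ha.symm
  have : z = a⁻¹ • w := by rw [← ha, smul_smul, inv_mul_cancel₀ ha0, one_smul]
  rw [this]
  exact isPeriodVec_smul hp (inv_ne_zero ha0)

/-- Gram–Schmidt: the period vector attached to a positive pair. -/
def psi {b : ℕ} (p : (Fin b → ℝ) × (Fin b → ℝ)) : Fin b → ℂ := fun i =>
  ((Real.sqrt (gram2 p.1 p.2) * p.1 i : ℝ) : ℂ) +
    ((qR p.1 * p.2 i - bR p.1 p.2 * p.1 i : ℝ) : ℂ) * Complex.I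

lemma psi_continuous {b : ℕ} : Continuous (psi (b := b)) := by
  have h1 : Continuous fun p : (Fin b → ℝ) × (Fin b → ℝ) => gram2 p.1 p.2 :=
    gram2_cont' continuous_fst continuous_snd
  have h2 : Continuous fun p : (Fin b → ℝ) × (Fin b → ℝ) => qR p.1 := qR_cont' continuous_fst
  have h3 : Continuous fun p : (Fin b → ℝ) × (Fin b → ℝ) => bR p.1 p.2 := bR_continuous
  unfold psi
  fun_prop

lemma rePart_psi {b : ℕ} (p : (Fin b → ℝ) × (Fin b → ℝ)) :
    rePart (psi p) = Real.sqrt (gram2 p.1 p.2) • p.1 := by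
  funext i; simp [rePart, psi]

lemma imPart_psi {b : ℕ} (p : (Fin b → ℝ) × (Fin b → ℝ)) :
    imPart (psi p) = qR p.1 • p.2 + (- bR p.1 p.2) • p.1 := by
  funext i; simp [imPart, psi]; ring

lemma psi_period {b : ℕ} {p : (Fin b → ℝ) × (Fin b → ℝ)} (h : Pos2 p.1 p.2) :
    isPeriodVec (psi p) := by
  rw [isPeriodVec_iff, rePart_psi, imPart_psi]
  obtain ⟨h1, h2⟩ := h
  have hs : Real.sqrt (gram2 p.1 p.2) * Real.sqrt (gram2 p.1 p.2) = gram2 p.1 p.2 :=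
    Real.mul_self_sqrt h2.le
  have e : qR (Real.sqrt (gram2 p.1 p.2) • p.1) = gram2 p.1 p.2 * qR p.1 := by
    unfold qR
    rw [bR_smul_left, bR_smul_right, ← mul_assoc, hs]
  refine ⟨?_, ?_, ?_⟩
  · rw [e]
    unfold gram2 qR
    simp only [bR_add_left, bR_add_right, bR_smul_left, bR_smul_right]
    rw [bR_comm p.2 p.1]
    ring
  · rw [bR_smul_left, bR_add_right, bR_smul_right, bR_smul_right]
    unfold qR
    ring
  · rw [e]; positivity

lemma period_ne_zero {b : ℕ} {z : Fin b → ℂ} (h : isPeriodVec z) : z ≠ 0 := by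
  rintro rfl
  have := h.2
  simp [bC] at this

lemma period_pos2 {b : ℕ} {z : Fin b → ℂ} (h : isPeriodVec z) : Pos2 (rePart z) (imPart z) := by
  rw [isPeriodVec_iff] at h
  obtain ⟨h1, h2, h3⟩ := h
  refine ⟨h3, ?_⟩
  unfold gram2
  rw [h2, ← h1]
  nlinarith [mul_pos h3 h3]

lemma psi_self {b : ℕ} {z : Fin b → ℂ} (h : isPeriodVec z) :
    psi (rePart z, imPart z) = ((qR (rePart z) : ℝ) : ℂ) • z := by
  rw [isPeriodVec_iff] at h
  obtain ⟨h1, h2, h3⟩ := h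
  have hg : Real.sqrt (gram2 (rePart z) (imPart z)) = qR (rePart z) := by
    unfold gram2
    rw [h2, ← h1]
    rw [zero_pow two_ne_zero, sub_zero, Real.sqrt_mul_self h3.le]
  funext i
  simp only [psi, hg, h2]
  apply Complex.ext <;> simp [rePart, imPart]

/-- total version of `mk` -/
def pm {b : ℕ} (x0 : Projectivization ℂ (Fin b → ℂ)) (z : Fin b → ℂ) :
    Projectivization ℂ (Fin b → ℂ) :=
  open Classical in if h : z ≠ 0 then Projectivization.mk ℂ z h else x0

lemma pm_eq {b : ℕ} (x0 : Projectivization ℂ (Fin b → ℂ)) {z : Fin b → ℂ} (h : z ≠ 0) :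
    pm x0 z = Projectivization.mk ℂ z h := by
  unfold pm; rw [dif_pos h]

lemma mk_cont {b : ℕ} : Continuous (fun z : {z : Fin b → ℂ // z ≠ 0} =>
    Projectivization.mk ℂ z.1 z.2) :=
  continuous_quotient_mk' (s := projectivizationSetoid ℂ (Fin b → ℂ))

lemma pm_cont {b : ℕ} (x0 : Projectivization ℂ (Fin b → ℂ)) :
    ContinuousOn (pm x0) {z | z ≠ 0} := by
  rw [continuousOn_iff_continuous_restrict]
  refine mk_cont.congr ?_
  intro z
  exact (pm_eq x0 z.2).symm

lemma isOpen_pm_preimage {b : ℕ} (x0 : Projectivization ℂ (Fin b → ℂ))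
    {U : Set (Projectivization ℂ (Fin b → ℂ))} (hU : IsOpen U) :
    IsOpen {z : Fin b → ℂ | z ≠ 0 ∧ pm x0 z ∈ U} :=
  (pm_cont x0).isOpen_inter_preimage isOpen_ne hU

lemma isOpen_pm_image {b : ℕ} (x0 : Projectivization ℂ (Fin b → ℂ))
    {N : Set (Fin b → ℂ)} (hN : IsOpen N) :
    IsOpen {y | ∃ z ∈ N, ∃ hz : z ≠ 0, Projectivization.mk ℂ z hz = y} := by
  have hq : IsQuotientMap (fun z : {z : Fin b → ℂ // z ≠ 0} =>
    Projectivization.mk ℂ z.1 z.2) :=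
    isQuotientMap_quotient_mk' (s := projectivizationSetoid ℂ (Fin b → ℂ))
  rw [← hq.isOpen_preimage]
  have : (fun z : {z : Fin b → ℂ // z ≠ 0} => Projectivization.mk ℂ z.1 z.2) ⁻¹'
      {y | ∃ z ∈ N, ∃ hz : z ≠ 0, Projectivization.mk ℂ z hz = y} =
      ⋃ a : ℂˣ, {z : {z : Fin b → ℂ // z ≠ 0} | (a : ℂ) • z.1 ∈ N} := by
    ext ⟨z, hz⟩
    simp only [Set.mem_preimage, Set.mem_setOf_eq, Set.mem_iUnion]
    constructor
    · rintro ⟨w, hw, hw0, he⟩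
      rw [Projectivization.mk_eq_mk_iff] at he
      obtain ⟨a, ha⟩ := he
      refine ⟨a, ?_⟩
      have : (a : ℂ) • z = w := ha
      rwa [this]
    · rintro ⟨a, ha⟩
      refine ⟨_, ha, smul_ne_zero a.ne_zero hz, ?_⟩
      rw [Projectivization.mk_eq_mk_iff]
      exact ⟨a, rfl⟩
  rw [this]
  refine isOpen_iUnion fun a => hN.preimage ?_
  fun_prop

/-- One step of strong equivalence. -/
def SStep {b : ℕ} (Λ : AddSubgroup (Fin b → ℝ)) (B : Set (Projectivization ℂ (Fin b → ℂ)))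
    (x y : Projectivization ℂ (Fin b → ℂ)) : Prop :=
  ∃ W : Submodule ℝ (Fin b → ℝ),
    (Module.finrank ℝ ↥W = 3 ∧ PosDefOn W ∧ IsGenericW Λ W) ∧
    x ∈ twistorLine W ∩ B ∧ y ∈ connectedComponentIn (twistorLine W ∩ B) x

lemma SStep.symm {b : ℕ} {Λ : AddSubgroup (Fin b → ℝ)}
    {B : Set (Projectivization ℂ (Fin b → ℂ))}
    {x y : Projectivization ℂ (Fin b → ℂ)} (h : SStep Λ B x y) : SStep Λ B y x := by
  obtain ⟨W, hW, hx, hy⟩ := h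
  refine ⟨W, hW, connectedComponentIn_subset _ _ hy, ?_⟩
  rw [← connectedComponentIn_eq hy]
  exact mem_connectedComponentIn hx

lemma SStep.right_mem {b : ℕ} {Λ : AddSubgroup (Fin b → ℝ)}
    {B : Set (Projectivization ℂ (Fin b → ℂ))}
    {x y : Projectivization ℂ (Fin b → ℂ)} (h : SStep Λ B x y) : y ∈ B := by
  obtain ⟨W, hW, hx, hy⟩ := h
  exact (connectedComponentIn_subset _ _ hy).2

lemma step_of_convex {b : ℕ} {Λ : AddSubgroup (Fin b → ℝ)}
    {B : Set (Projectivization ℂ (Fin b → ℂ))} (x0 : Projectivization ℂ (Fin b → ℂ))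
    {K : Set ((Fin b → ℝ) × (Fin b → ℝ))} (hK : Convex ℝ K)
    (hKB : ∀ p ∈ K, Pos2 p.1 p.2 ∧ pm x0 (psi p) ∈ B)
    {u v w : Fin b → ℝ} (hpos : Pos3 u v w) (hw : GenVec Λ w)
    {p p' : (Fin b → ℝ) × (Fin b → ℝ)} (hp : p ∈ K) (hp' : p' ∈ K)
    (hp1 : p.1 ∈ ({u, v, w} : Set (Fin b → ℝ))) (hp2 : p.2 ∈ ({u, v, w} : Set (Fin b → ℝ)))
    (hp1' : p'.1 ∈ ({u, v, w} : Set (Fin b → ℝ)))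
    (hp2' : p'.2 ∈ ({u, v, w} : Set (Fin b → ℝ))) :
    SStep Λ B (pm x0 (psi p)) (pm x0 (psi p')) := by
  set W := Submodule.span ℝ {u, v, w} with hW
  let S : Set ((Fin b → ℝ) × (Fin b → ℝ)) := K ∩ ((W.prod W : Submodule ℝ _) : Set _)
  have hS : IsPreconnected S := (hK.inter (W.prod W).convex).isPreconnected
  have hne : ∀ q ∈ S, psi q ≠ 0 := fun q hq => period_ne_zero (psi_period (hKB q hq.1).1)
  have himg : IsPreconnected ((fun q => pm x0 (psi q)) '' S) := by
    refine hS.image _ ?_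
    exact (pm_cont x0).comp psi_continuous.continuousOn hne
  have hsub : (fun q => pm x0 (psi q)) '' S ⊆ twistorLine W ∩ B := by
    rintro _ ⟨q, hq, rfl⟩
    refine ⟨⟨psi q, hne q hq, (pm_eq x0 _).symm, psi_period (hKB q hq.1).1, ?_, ?_⟩,
      (hKB q hq.1).2⟩
    · rw [rePart_psi]
      exact W.smul_mem _ hq.2.1
    · rw [imPart_psi]
      exact W.add_mem (W.smul_mem _ hq.2.2) (W.smul_mem _ hq.2.1)
  have m1 : p ∈ S := ⟨hp, Submodule.subset_span hp1, Submodule.subset_span hp2⟩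
  have m2 : p' ∈ S := ⟨hp', Submodule.subset_span hp1', Submodule.subset_span hp2'⟩
  refine ⟨W, ⟨hpos.finrank, hpos.posDefOn,
    hw.generic (Submodule.subset_span (by simp))⟩, hsub ⟨p, m1, rfl⟩, ?_⟩
  exact himg.subset_connectedComponentIn ⟨p, m1, rfl⟩ hsub ⟨p', m2, rfl⟩

lemma local_pairs {b : ℕ} (hb : 3 ≤ b) {Λ : AddSubgroup (Fin b → ℝ)}
    (hΛ : (Λ : Set (Fin b → ℝ)).Countable)
    {B : Set (Projectivization ℂ (Fin b → ℂ))} (x0 : Projectivization ℂ (Fin b → ℂ))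
    {K : Set ((Fin b → ℝ) × (Fin b → ℝ))} (hK : Convex ℝ K) (hKo : IsOpen K)
    (hKB : ∀ p ∈ K, Pos2 p.1 p.2 ∧ pm x0 (psi p) ∈ B)
    {a0 b0 : Fin b → ℝ} (hp0 : (a0, b0) ∈ K) :
    ∃ N : Set ((Fin b → ℝ) × (Fin b → ℝ)), IsOpen N ∧ (a0, b0) ∈ N ∧
      ∀ p ∈ N, Relation.TransGen (SStep Λ B) (pm x0 (psi (a0, b0))) (pm x0 (psi p)) := by
  obtain ⟨c, hc, hac, hbc⟩ := exists_third hb a0 b0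
  have hpos : Pos2 a0 b0 := (hKB _ hp0).1
  -- choose `t`
  have hu : ∃ u, GenVec Λ u ∧ Pos3 a0 b0 u ∧ (a0, u) ∈ K := by
    have hev : ∀ᶠ t : ℝ in 𝓝[>] 0, (a0, b0 + t • c) ∈ K := by
      apply Filter.Eventually.filter_mono nhdsWithin_le_nhds
      have hcont : Continuous fun t : ℝ => (a0, b0 + t • c) := by fun_prop
      exact (hKo.preimage hcont).mem_nhds (by simpa using hp0)
    obtain ⟨t, ht, ht0⟩ := (hev.and self_mem_nhdsWithin).exists
    have hopen : IsOpen {u | Pos3 a0 b0 u ∧ (a0, u) ∈ K} :=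
      (isOpen_Pos3 continuous_const continuous_const continuous_id).inter
        (hKo.preimage (by fun_prop))
    obtain ⟨u, hu1, hu2⟩ := (dense_genVec hΛ).inter_open_nonempty _ hopen
      ⟨b0 + t • c, pos3_shift hpos hc hac hbc ht0, ht⟩
    exact ⟨u, hu2, hu1⟩
  have hv : ∃ v, GenVec Λ v ∧ Pos3 b0 a0 v ∧ (v, b0) ∈ K := by
    have hev : ∀ᶠ t : ℝ in 𝓝[>] 0, (a0 + t • c, b0) ∈ K := by
      apply Filter.Eventually.filter_mono nhdsWithin_le_nhds
      have hcont : Continuous fun t : ℝ => (a0 + t • c, b0) := by fun_prop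
      exact (hKo.preimage hcont).mem_nhds (by simpa using hp0)
    obtain ⟨t, ht, ht0⟩ := (hev.and self_mem_nhdsWithin).exists
    have hopen : IsOpen {u | Pos3 b0 a0 u ∧ (u, b0) ∈ K} :=
      (isOpen_Pos3 continuous_const continuous_const continuous_id).inter
        (hKo.preimage (by fun_prop))
    obtain ⟨u, hu1, hu2⟩ := (dense_genVec hΛ).inter_open_nonempty _ hopen
      ⟨a0 + t • c, pos3_shift hpos.symm hc hbc hac ht0, ht⟩
    exact ⟨u, hu2, hu1⟩
  obtain ⟨u, hug, hu3, huK⟩ := hu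
  obtain ⟨v, hvg, hv3, hvK⟩ := hv
  refine ⟨{p | p ∈ K} ∩ ({p | Pos3 a0 p.2 u} ∩ ({p | (a0, p.2) ∈ K} ∩ ({p | (v, p.2) ∈ K} ∩
    ({p | Pos3 p.2 a0 v} ∩ {p | Pos3 p.2 p.1 v})))), ?_, ⟨hp0, hu3, hp0, hvK, hv3, hv3⟩, ?_⟩
  · refine hKo.inter ((isOpen_Pos3 continuous_const continuous_snd continuous_const).inter
      ((hKo.preimage (by fun_prop)).inter ((hKo.preimage (by fun_prop)).inter
      ((isOpen_Pos3 continuous_snd continuous_const continuous_const).inter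
        (isOpen_Pos3 continuous_snd continuous_fst continuous_const)))))
  · rintro ⟨a, d⟩ ⟨h1, h2, h3, h4, h5, h6⟩
    have s1 : SStep Λ B (pm x0 (psi (a0, b0))) (pm x0 (psi (a0, u))) :=
      step_of_convex x0 hK hKB hu3 hug hp0 huK (by simp) (by simp) (by simp) (by simp)
    have s2 : SStep Λ B (pm x0 (psi (a0, u))) (pm x0 (psi (a0, d))) :=
      step_of_convex x0 hK hKB h2 hug huK h3 (by simp) (by simp) (by simp) (by simp)
    have s3 : SStep Λ B (pm x0 (psi (a0, d))) (pm x0 (psi (v, d))) :=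
      step_of_convex x0 hK hKB h5 hvg h3 h4 (by simp) (by simp) (by simp) (by simp)
    have s4 : SStep Λ B (pm x0 (psi (v, d))) (pm x0 (psi (a, d))) :=
      step_of_convex x0 hK hKB h6 hvg h4 h1 (by simp) (by simp) (by simp) (by simp)
    exact (((Relation.TransGen.single s1).tail s2).tail s3).tail s4

lemma pm_psi_self {b : ℕ} (x0 : Projectivization ℂ (Fin b → ℂ)) {z : Fin b → ℂ}
    (h : isPeriodVec z) (hz : z ≠ 0) :
    pm x0 (psi (rePart z, imPart z)) = Projectivization.mk ℂ z hz := by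
  have hne : psi (rePart z, imPart z) ≠ 0 := period_ne_zero (psi_period (period_pos2 h))
  rw [pm_eq x0 hne, Projectivization.mk_eq_mk_iff']
  exact ⟨_, (psi_self h).symm⟩

lemma local_equiv {b : ℕ} (hb : 3 ≤ b) {Λ : AddSubgroup (Fin b → ℝ)}
    (hΛ : (Λ : Set (Fin b → ℝ)).Countable)
    {B : Set (Projectivization ℂ (Fin b → ℂ))} (hBD : B ⊆ periodDomain b)
    (hBopen : ∃ U, IsOpen U ∧ B = U ∩ periodDomain b)
    (x : Projectivization ℂ (Fin b → ℂ)) (hx : x ∈ B) :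
    ∀ᶠ y in 𝓝[B] x, Relation.TransGen (SStep Λ B) x y := by
  obtain ⟨U, hU, hBU⟩ := hBopen
  obtain ⟨z, hz, hzx, hper⟩ := hBD hx
  have hO : IsOpen ({p : (Fin b → ℝ) × (Fin b → ℝ) | Pos2 p.1 p.2} ∩
      psi ⁻¹' {z | z ≠ 0 ∧ pm x z ∈ U}) :=
    (isOpen_Pos2 continuous_fst continuous_snd).inter
      ((isOpen_pm_preimage x hU).preimage psi_continuous)
  have hOB : ∀ p ∈ ({p : (Fin b → ℝ) × (Fin b → ℝ) | Pos2 p.1 p.2} ∩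
      psi ⁻¹' {z | z ≠ 0 ∧ pm x z ∈ U}), Pos2 p.1 p.2 ∧ pm x (psi p) ∈ B := by
    rintro p ⟨h1, h2, h3⟩
    refine ⟨h1, ?_⟩
    rw [hBU]
    exact ⟨h3, psi p, h2, (pm_eq x h2).symm, psi_period h1⟩
  have hx0 : pm x (psi (rePart z, imPart z)) = x := by rw [pm_psi_self x hper hz, hzx]
  have hp0 : (rePart z, imPart z) ∈ ({p : (Fin b → ℝ) × (Fin b → ℝ) | Pos2 p.1 p.2} ∩
      psi ⁻¹' {z | z ≠ 0 ∧ pm x z ∈ U}) := by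
    refine ⟨period_pos2 hper, period_ne_zero (psi_period (period_pos2 hper)), ?_⟩
    rw [hx0]
    rw [hBU] at hx
    exact hx.1
  obtain ⟨r, hr, hball⟩ := Metric.isOpen_iff.1 hO _ hp0
  obtain ⟨N, hN, hpN, hNstep⟩ := local_pairs hb hΛ x (convex_ball (rePart z, imPart z) r)
    Metric.isOpen_ball (fun p hp => hOB p (hball hp)) (Metric.mem_ball_self hr)
  rw [hx0] at hNstep
  have hcont : Continuous fun w : Fin b → ℂ => (rePart w, imPart w) := by
    unfold rePart imPart
    fun_prop
  have hNo := isOpen_pm_image x (hN.preimage hcont)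
  have hmem := hNo.mem_nhds ⟨z, hpN, hz, hzx⟩
  filter_upwards [mem_nhdsWithin_of_mem_nhds hmem, self_mem_nhdsWithin] with y hy hyB
  obtain ⟨w, hwN, hw0, rfl⟩ := hy
  have hwp : isPeriodVec w := period_of_mem hw0 (hBD hyB)
  have := hNstep _ hwN
  rwa [pm_psi_self x hwp hw0] at this

end Helpers

/-- any two points of a connected open subset `B` of the period domain are
strongly equivalent as points of `B`: they are connected by a chain of generic twistor
lines, with consecutive points in the same connected component of `T_{W_i} ∩ B`. -/
theorem stmt10 (b : ℕ) (hb : 3 ≤ b) (Λ : AddSubgroup (Fin b → ℝ))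
    (hΛ : (Λ : Set (Fin b → ℝ)).Countable)
    (B : Set (Projectivization ℂ (Fin b → ℂ))) (hBD : B ⊆ periodDomain b)
    (hBopen : ∃ U, IsOpen U ∧ B = U ∩ periodDomain b)
    (hBconn : IsConnected B)
    (x y : Projectivization ℂ (Fin b → ℂ)) (hx : x ∈ B) (hy : y ∈ B) :
    ∃ k : ℕ, 1 ≤ k ∧ ∃ (W : Fin k → Submodule ℝ (Fin b → ℝ))
      (c : Fin (k + 1) → Projectivization ℂ (Fin b → ℂ)),
      (∀ i, Module.finrank ℝ ↥(W i) = 3 ∧ PosDefOn (W i) ∧ IsGenericW Λ (W i)) ∧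
      (∀ j, c j ∈ B) ∧ c 0 = x ∧ c (Fin.last k) = y ∧
      ∀ i : Fin k, c i.castSucc ∈ twistorLine (W i) ∩ B ∧
        c i.succ ∈ connectedComponentIn (twistorLine (W i) ∩ B) (c i.castSucc) := by
  have hR : Relation.TransGen (SStep Λ B) x y := by
    refine hBconn.isPreconnected.induction₂ (Relation.TransGen (SStep Λ B))
      (fun x hx => local_equiv hb hΛ hBD hBopen x hx) (fun _ _ _ _ _ _ h1 h2 => h1.trans h2)
      (fun p q _ _ h => ?_) hx hy
    rename_i hp' hq'
    clear hp' hq'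
    induction h with
    | single h => exact .single h.symm
    | tail _ h ih => exact .head h.symm ih
  clear hy
  induction hR with
  | single h =>
    obtain ⟨W, hW, h1, h2⟩ := id h
    refine ⟨1, le_rfl, fun _ => W, ![x, _], fun _ => hW, ?_, rfl, rfl, ?_⟩
    · intro j
      fin_cases j
      · exact hx
      · exact h.right_mem
    · intro i
      fin_cases i
      exact ⟨h1, h2⟩
  | tail _ h ih =>
    obtain ⟨k, hk, W', c, hW', hcB, hc0, hcl, hstep⟩ := ih
    obtain ⟨W, hW, h1, h2⟩ := id h
    refine ⟨k + 1, by omega, Fin.snoc (α := fun _ => Submodule ℝ (Fin b → ℝ)) W' W,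
      Fin.snoc (α := fun _ => Projectivization ℂ (Fin b → ℂ)) c _, ?_, ?_, ?_,
      Fin.snoc_last (α := fun _ => Projectivization ℂ (Fin b → ℂ)) _ _, ?_⟩
    · intro i
      refine Fin.lastCases ?_ (fun i => ?_) i
      · rw [Fin.snoc_last (α := fun _ => Submodule ℝ (Fin b → ℝ))]
        exact hW
      · rw [Fin.snoc_castSucc (α := fun _ => Submodule ℝ (Fin b → ℝ))]
        exact hW' i
    · intro j
      refine Fin.lastCases ?_ (fun j => ?_) j
      · simpa using h.right_mem
      · simpa using hcB j
    · rw [← Fin.castSucc_zero, Fin.snoc_castSucc (α := fun _ => Projectivization ℂ (Fin b → ℂ))]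
      exact hc0
    · intro i
      refine Fin.lastCases ?_ (fun i => ?_) i
      · rw [Fin.snoc_castSucc (α := fun _ => Projectivization ℂ (Fin b → ℂ)), Fin.succ_last,
          Fin.snoc_last (α := fun _ => Projectivization ℂ (Fin b → ℂ)),
          Fin.snoc_last (α := fun _ => Submodule ℝ (Fin b → ℝ)), hcl]
        exact ⟨h1, h2⟩
      · rw [Fin.snoc_castSucc (α := fun _ => Projectivization ℂ (Fin b → ℂ)), Fin.succ_castSucc,
          Fin.snoc_castSucc (α := fun _ => Projectivization ℂ (Fin b → ℂ)),
          Fin.snoc_castSucc (α := fun _ => Submodule ℝ (Fin b → ℝ))]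
        exact hstep i
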